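/- The bubble satisfies the integration-by-parts identity (cₙ/2)·∫_{ℝⁿ₊} |∇U(x)|² dx = (cₙ(n−2)/4)·H·∫_{ℝ^{n−1}} U(x̃, 0)^{2(n−1)/(n−2)} dx̃ − (1/2)·|K|·∫_{ℝⁿ₊} U(x)^{2n/(n−2)} dx. -/

import Mathlib

open Real MeasureTheory

noncomputable section

/-- `αₙ = (4n(n−1))^((n−2)/4)`. -/
def alphaN (n : ℕ) : ℝ := (4 * (n : ℝ) * ((n : ℝ) - 1)) ^ (((n : ℝ) - 2) / 4)

/-- `cₙ = 4(n−1)/(n−2)`. -/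
def cN (n : ℕ) : ℝ := 4 * ((n : ℝ) - 1) / ((n : ℝ) - 2)

/-- Points of `ℝⁿ = ℝ^{n-1} × ℝ`, written as pairs `(y, xₙ)`. -/
abbrev HalfPt (n : ℕ) := (Fin (n - 1) → ℝ) × ℝ

/-- `|y|² + (xₙ + D)² − 1`. -/
def QD (n : ℕ) (D : ℝ) (x : HalfPt n) : ℝ := (∑ i, (x.1 i) ^ 2) + (x.2 + D) ^ 2 - 1

/-- The standard bubble `U(x) = αₙ |K|^{-(n-2)/4} (|y|² + (xₙ+D)² − 1)^{-(n-2)/2}`. -/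
def bubbleU (n : ℕ) (K D : ℝ) (x : HalfPt n) : ℝ :=
  alphaN n * |K| ^ (-(((n : ℝ) - 2) / 4)) * QD n D x ^ (-(((n : ℝ) - 2) / 2))

/-- Second directional derivative of `f` in the direction `v` at `x`. -/
def dd2 (n : ℕ) (f : HalfPt n → ℝ) (v : HalfPt n) (x : HalfPt n) : ℝ :=
  fderiv ℝ (fun y => fderiv ℝ f y v) x v

/-- Euclidean Laplacian: sum of the second partial derivatives along the coordinate
directions of `ℝ^{n-1} × ℝ`. -/
def lap (n : ℕ) (f : HalfPt n → ℝ) (x : HalfPt n) : ℝ :=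
  (∑ i : Fin (n - 1), dd2 n f (Pi.single i 1, 0) x) + dd2 n f ((0 : Fin (n - 1) → ℝ), 1) x

/-- The bubble family `U_{δ,x₀(δ)}` with `x₀(δ) = (t, −Dδ)`. -/
def bubbleFam (n : ℕ) (K D δ : ℝ) (t : Fin (n - 1) → ℝ) (x : HalfPt n) : ℝ :=
  alphaN n * |K| ^ (-(((n : ℝ) - 2) / 4)) * δ ^ (((n : ℝ) - 2) / 2) *
    ((∑ i, (x.1 i - t i) ^ 2) + (x.2 + D * δ) ^ 2 - δ ^ 2) ^ (-(((n : ℝ) - 2) / 2))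

/-- `𝔧ᵢ`, `i = 1, …, n−1`: the tangential derivatives of the bubble. -/
def jTan (n : ℕ) (K D : ℝ) (i : Fin (n - 1)) (x : HalfPt n) : ℝ :=
  alphaN n * |K| ^ (-(((n : ℝ) - 2) / 4)) * (2 - (n : ℝ)) * x.1 i * QD n D x ^ (-((n : ℝ) / 2))

/-- `𝔧ₙ`. -/
def jNor (n : ℕ) (K D : ℝ) (x : HalfPt n) : ℝ :=
  alphaN n * |K| ^ (-(((n : ℝ) - 2) / 4)) * (((n : ℝ) - 2) / 2) *
    ((∑ i, (x.1 i) ^ 2) + x.2 ^ 2 + 1 - D ^ 2) * QD n D x ^ (-((n : ℝ) / 2))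

/-- All the `𝔧ᵢ`, `i = 1, …, n`, indexed by `Fin n`. -/
def jAll (n : ℕ) (K D : ℝ) (i : Fin n) (x : HalfPt n) : ℝ :=
  if h : (i : ℕ) < n - 1 then jTan n K D ⟨(i : ℕ), h⟩ x else jNor n K D x

/-- `I^n_{n-1} = ∫₀^∞ ρⁿ (1+ρ²)^{-(n-1)} dρ`. -/
def Iconst (n : ℕ) : ℝ := ∫ ρ in Set.Ioi (0 : ℝ), ρ ^ n / (1 + ρ ^ 2) ^ (n - 1)

/-- `ω_{n-1}`: the `(n−2)`-dimensional Hausdorff measure of the unit sphere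
`S^{n-2} ⊆ ℝ^{n-1}`. -/
def omegaN (n : ℕ) : ℝ :=
  (μH[(n : ℝ) - 2] (Metric.sphere (0 : EuclideanSpace ℝ (Fin (n - 1))) 1)).toReal

/-- `φ_m(D) = ∫_D^∞ (t²−1)^{−m} dt`. -/
def phiFun (m D : ℝ) : ℝ := ∫ t in Set.Ioi D, (t ^ 2 - 1) ^ (-m)

/-- `|∇f(x)|²`, the squared Euclidean norm of the gradient. -/
def gradSq (n : ℕ) (f : HalfPt n → ℝ) (x : HalfPt n) : ℝ :=
  (∑ i : Fin (n - 1), (fderiv ℝ f x (Pi.single i 1, (0 : ℝ))) ^ 2) +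
    (fderiv ℝ f x ((0 : Fin (n - 1) → ℝ), 1)) ^ 2

/-- The energy of the bubble. -/
def energyE (n : ℕ) (K H D : ℝ) : ℝ :=
  cN n / 2 * (∫ x in {x : HalfPt n | 0 < x.2}, gradSq n (bubbleU n K D) x) +
    ((n : ℝ) - 2) / (2 * (n : ℝ)) * |K| *
      (∫ x in {x : HalfPt n | 0 < x.2}, bubbleU n K D x ^ (2 * (n : ℝ) / ((n : ℝ) - 2))) -
    ((n : ℝ) - 2) * H *
      (∫ y : Fin (n - 1) → ℝ, bubbleU n K D (y, 0) ^ (2 * ((n : ℝ) - 1) / ((n : ℝ) - 2)))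

/-- The Euclidean norm `|x|` on `ℝ^{n-1} × ℝ`. -/
def enormE (n : ℕ) (x : HalfPt n) : ℝ := Real.sqrt ((∑ i, (x.1 i) ^ 2) + x.2 ^ 2)

/-- The source term `E_h`. -/
def Ehsrc (n : ℕ) (K D : ℝ) (h : Fin (n - 1) → Fin (n - 1) → ℝ) (x : HalfPt n) : ℝ :=
  (8 * ((n : ℝ) - 1) / ((n : ℝ) - 2)) *
    (∑ i : Fin (n - 1), ∑ j : Fin (n - 1),
      h i j *
        fderiv ℝ (fun y => fderiv ℝ (bubbleU n K D) y (Pi.single j 1, (0 : ℝ))) x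
          (Pi.single i 1, (0 : ℝ))) * x.2

lemma exists_rpow_neg_le_of_sq_add_le {ε s : ℝ} (hε : 0 < ε) (hs : 0 ≤ s) :
    ∃ C : ℝ, ∀ r b : ℝ, 0 ≤ r → r ^ 2 + ε ≤ b → b ^ (-s) ≤ C * (1 + r) ^ (-(2 * s)) := by
  have hk : 0 < 2 + 2 / ε := by positivity
  refine ⟨(2 + 2 / ε) ^ s, fun r b hr hb => ?_⟩
  have hb0 : 0 < b := by nlinarith [sq_nonneg r]
  have h1 : (1 + r) ^ 2 / (2 + 2 / ε) ≤ b := by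
    rw [div_le_iff₀ hk]
    have h2 : (r ^ 2 + ε) * (2 + 2 / ε) ≤ b * (2 + 2 / ε) := by gcongr
    have h3 : (r ^ 2 + ε) * (2 + 2 / ε) = 2 * r ^ 2 + 2 * ε + 2 + 2 * r ^ 2 / ε := by
      field_simp
      ring
    have h4 : 0 ≤ 2 * r ^ 2 / ε := by positivity
    nlinarith [sq_nonneg (r - 1)]
  calc b ^ (-s) ≤ ((1 + r) ^ 2 / (2 + 2 / ε)) ^ (-s) :=
        rpow_le_rpow_of_nonpos (by positivity) h1 (by linarith)
    _ = (2 + 2 / ε) ^ s * (1 + r) ^ (-(2 * s)) := by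
        rw [div_rpow (by positivity) hk.le, rpow_neg hk.le, div_inv_eq_mul, mul_comm,
          ← rpow_natCast, ← rpow_mul (by positivity)]
        congr 2
        push_cast
        ring

lemma integrableOn_rpow_neg_of_norm_sq_add_le {E : Type*} [NormedAddCommGroup E]
    [NormedSpace ℝ E] [FiniteDimensional ℝ E] [MeasurableSpace E] [BorelSpace E]
    {μ : Measure E} [μ.IsAddHaarMeasure] {S : Set E} (hS : MeasurableSet S) {q : E → ℝ}
    (hq : Measurable q) {ε s : ℝ} (hε : 0 < ε) (hqS : ∀ x ∈ S, ‖x‖ ^ 2 + ε ≤ q x)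
    (hs : (Module.finrank ℝ E : ℝ) < 2 * s) :
    IntegrableOn (fun x => q x ^ (-s)) S μ := by
  have hs0 : 0 ≤ s := by
    have : (0 : ℝ) ≤ Module.finrank ℝ E := Nat.cast_nonneg _
    linarith
  obtain ⟨C, hC⟩ := exists_rpow_neg_le_of_sq_add_le hε hs0
  refine Integrable.mono' (((integrable_one_add_norm (μ := μ) hs).const_mul C).integrableOn)
    (hq.pow_const _).aestronglyMeasurable ?_
  filter_upwards [ae_restrict_mem hS] with x hx
  have h := hqS x hx
  have : 0 < q x := by nlinarith [sq_nonneg ‖x‖]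
  rw [norm_of_nonneg (by positivity)]
  exact hC _ _ (norm_nonneg _) h

lemma norm_sq_le_sum_sq {ι : Type*} [Fintype ι] (y : ι → ℝ) : ‖y‖ ^ 2 ≤ ∑ i, y i ^ 2 := by
  have hs : 0 ≤ ∑ i, y i ^ 2 := Finset.sum_nonneg fun i _ => sq_nonneg _
  have h : ‖y‖ ≤ √(∑ i, y i ^ 2) := by
    refine (pi_norm_le_iff_of_nonneg (sqrt_nonneg _)).2 fun i => ?_
    rw [Real.norm_eq_abs]
    refine abs_le_sqrt ?_
    exact Finset.single_le_sum (f := fun i => y i ^ 2) (fun i _ => sq_nonneg _)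
      (Finset.mem_univ i)
  calc ‖y‖ ^ 2 ≤ √(∑ i, y i ^ 2) ^ 2 := by gcongr
    _ = _ := sq_sqrt hs

lemma abs_mul_rpow_neg_le {z b k s : ℝ} (hb : 0 < b) (hz : z ^ 2 ≤ k ^ 2 * b) (hk : 0 ≤ k) :
    |z * b ^ (-s)| ≤ k * b ^ (-(s - 1 / 2)) := by
  have h1 : |z| ≤ k * b ^ (1 / 2 : ℝ) := by
    rw [← sqrt_eq_rpow]
    refine abs_le_of_sq_le_sq ?_ (by positivity)
    rw [mul_pow, sq_sqrt hb.le]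
    exact hz
  rw [abs_mul, abs_of_nonneg (rpow_nonneg hb.le (-s))]
  calc |z| * b ^ (-s) ≤ k * b ^ (1 / 2 : ℝ) * b ^ (-s) := by gcongr
    _ = _ := by
      rw [mul_assoc, ← rpow_add hb]
      congr 2
      ring

lemma abs_sq_mul_rpow_neg_le {z b k s : ℝ} (hb : 0 < b) (hz : z ^ 2 ≤ k * b) :
    |z ^ 2 * b ^ (-s - 1)| ≤ k * b ^ (-s) := by
  rw [abs_of_nonneg (by positivity), rpow_sub_one hb.ne']
  calc z ^ 2 * (b ^ (-s) / b) ≤ k * b * (b ^ (-s) / b) := by gcongr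
    _ = _ := by field_simp

/-- Integration by parts along the coordinate `i`, with no boundary. -/
lemma integral_sq_mul_rpow_sum_sq_add {ι : Type*} [Fintype ι] {c a : ℝ} (hc : 0 < c)
    (ha : (Fintype.card ι : ℝ) + 1 < 2 * a) (i : ι) :
    ∫ y : ι → ℝ, 2 * a * (y i ^ 2 * (∑ j, y j ^ 2 + c) ^ (-a - 1)) =
      ∫ y : ι → ℝ, (∑ j, y j ^ 2 + c) ^ (-a) := by
  classical
  set q : (ι → ℝ) → ℝ := fun y => ∑ j, y j ^ 2 + c with hq
  have hqm : Measurable q := by fun_prop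
  have hqn : ∀ y, ‖y‖ ^ 2 + c ≤ q y := fun y => by
    have := norm_sq_le_sum_sq y
    simp only [hq]; linarith
  have hq0 : ∀ y, 0 < q y := fun y => by nlinarith [hqn y, sq_nonneg ‖y‖]
  have hyq : ∀ y, y i ^ 2 ≤ q y := fun y => by
    have := Finset.single_le_sum (f := fun i => y i ^ 2) (fun i _ => sq_nonneg _)
      (Finset.mem_univ i)
    simp only [hq]; linarith
  have hI : ∀ s : ℝ, (Fintype.card ι : ℝ) < 2 * s → Integrable (fun y => q y ^ (-s)) := by
    intro s hs
    rw [← integrableOn_univ]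
    exact integrableOn_rpow_neg_of_norm_sq_add_le MeasurableSet.univ hqm hc (fun y _ => hqn y)
      (by simpa using hs)
  have h1 : Integrable (fun y : ι → ℝ => y i * q y ^ (-a)) := by
    refine Integrable.mono' ((hI (a - 1 / 2) (by linarith)).const_mul 1)
      (by fun_prop) (.of_forall fun y => ?_)
    exact abs_mul_rpow_neg_le (hq0 y) (by linarith [hyq y]) zero_le_one
  have h2 : Integrable (fun y : ι → ℝ => y i ^ 2 * q y ^ (-a - 1)) := by
    refine Integrable.mono' ((hI a (by linarith)).const_mul 1)
      (by fun_prop) (.of_forall fun y => ?_)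
    exact abs_sq_mul_rpow_neg_le (hq0 y) (by linarith [hyq y])
  have hd : ∀ y, HasLineDerivAt ℝ (fun y => q y ^ (-a))
      (-(2 * a) * (y i * q y ^ (-a - 1))) y (Pi.single i 1) := by
    intro y
    have hqd : HasFDerivAt q (∑ j, (2 * y j) • ContinuousLinearMap.proj (R := ℝ)
        (φ := fun _ : ι => ℝ) j) y := by
      refine HasFDerivAt.add_const c (HasFDerivAt.fun_sum fun j _ => ?_)
      simpa using (ContinuousLinearMap.proj (R := ℝ) (φ := fun _ : ι => ℝ) j).hasFDerivAt
        (x := y) |>.pow 2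
    have := (hqd.rpow_const (p := -a) (Or.inl (hq0 y).ne')).hasLineDerivAt (Pi.single i 1)
    have e : ((-a * q y ^ (-a - 1)) • ∑ j, (2 * y j) • ContinuousLinearMap.proj (R := ℝ)
        (φ := fun _ : ι => ℝ) j) (Pi.single i 1) = -(2 * a) * (y i * q y ^ (-a - 1)) := by
      simp [Pi.single_apply]
      ring
    rwa [e] at this
  have key := integral_bilinear_hasLineDerivAt_right_eq_neg_left_of_integrable
    (μ := (volume : Measure (ι → ℝ))) (f := fun y : ι → ℝ => y i) (f' := fun _ => (1 : ℝ))
    (g := fun y => q y ^ (-a)) (g' := fun y => -(2 * a) * (y i * q y ^ (-a - 1)))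
    (v := Pi.single i 1) (B := ContinuousLinearMap.mul ℝ ℝ)
    (by simpa using hI a (by linarith))
    (by
      convert h2.const_mul (-(2 * a)) using 2 with y
      simp only [ContinuousLinearMap.mul_apply']
      ring)
    (by simpa using h1)
    (fun y _ => by
      have := ((ContinuousLinearMap.proj (R := ℝ) (φ := fun _ : ι => ℝ) i).hasFDerivAt
        (x := y)).hasLineDerivAt (Pi.single i 1)
      rw [ContinuousLinearMap.proj_apply, Pi.single_eq_same] at this
      exact this)
    (fun y _ => hd y)
  simp only [ContinuousLinearMap.mul_apply', one_mul] at key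
  rw [← neg_inj, ← key, ← integral_neg]
  congr 1 with y
  ring

/-- The boundary term in the normal direction. -/
lemma integral_Ioi_deriv_mul_rpow {S D a : ℝ} (hS : 0 ≤ S) (hD : 1 < D) (ha : 1 < 2 * a) :
    ∫ t in Set.Ioi (0 : ℝ), ((S + (t + D) ^ 2 - 1) ^ (-a) -
        2 * a * ((t + D) ^ 2 * (S + (t + D) ^ 2 - 1) ^ (-a - 1))) =
      -(D * (S + D ^ 2 - 1) ^ (-a)) := by
  set q : ℝ → ℝ := fun t => S + (t + D) ^ 2 - 1 with hq
  have hε : 0 < D ^ 2 - 1 := by nlinarith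
  have hqn : ∀ t, 0 ≤ t → t ^ 2 + (D ^ 2 - 1) ≤ q t := fun t ht => by
    simp only [hq]; nlinarith
  have hq0 : ∀ t, 0 ≤ t → 0 < q t := fun t ht => by nlinarith [hqn t ht, sq_nonneg t]
  have hzq : ∀ t, 0 ≤ t → (t + D) ^ 2 ≤ (1 + 1 / (D ^ 2 - 1)) * q t := fun t ht => by
    have h1 : 1 ≤ 1 / (D ^ 2 - 1) * q t := by
      rw [one_div, inv_mul_eq_div, one_le_div hε]
      nlinarith [hqn t ht, sq_nonneg t]
    have h2 : q t = S + (t + D) ^ 2 - 1 := rfl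
    linarith
  have hI : IntegrableOn (fun t => q t ^ (-a)) (Set.Ioi 0) :=
    integrableOn_rpow_neg_of_norm_sq_add_le measurableSet_Ioi (by fun_prop) hε
      (fun t ht => by simpa using hqn t (le_of_lt ht)) (by simpa using ha)
  have hI2 : IntegrableOn (fun t => (t + D) ^ 2 * q t ^ (-a - 1)) (Set.Ioi 0) := by
    refine Integrable.mono' (hI.const_mul (1 + 1 / (D ^ 2 - 1)))
      (Measurable.aestronglyMeasurable (by fun_prop)) ?_
    filter_upwards [ae_restrict_mem measurableSet_Ioi] with t ht
    exact abs_sq_mul_rpow_neg_le (hq0 t (le_of_lt ht)) (hzq t (le_of_lt ht))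
  have hd : ∀ t ∈ Set.Ici (0 : ℝ), HasDerivAt (fun t => (t + D) * q t ^ (-a))
      (q t ^ (-a) - 2 * a * ((t + D) ^ 2 * q t ^ (-a - 1))) t := by
    intro t ht
    have h1 : HasDerivAt (fun t => t + D) 1 t := (hasDerivAt_id t).add_const D
    have h2 : HasDerivAt q (2 * (t + D)) t := by
      refine (((h1.pow 2).const_add S).sub_const 1).congr_deriv ?_
      simp
    refine (h1.mul (h2.rpow_const (p := -a) (Or.inl (hq0 t ht).ne'))).congr_deriv ?_
    ring
  have hlim : Filter.Tendsto (fun t => (t + D) * q t ^ (-a)) Filter.atTop (nhds 0) := by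
    have hqt : Filter.Tendsto q Filter.atTop Filter.atTop := by
      refine Filter.tendsto_atTop_mono' _ ?_ (Filter.tendsto_pow_atTop (two_ne_zero))
      filter_upwards [Filter.eventually_ge_atTop 0] with t ht
      linarith [hqn t ht]
    have h3 := ((tendsto_rpow_neg_atTop (y := a - 1 / 2) (by linarith)).comp hqt).const_mul
      √(1 + 1 / (D ^ 2 - 1))
    rw [mul_zero] at h3
    refine squeeze_zero_norm' ?_ h3
    filter_upwards [Filter.eventually_ge_atTop 0] with t ht
    refine abs_mul_rpow_neg_le (hq0 t ht) ?_ (sqrt_nonneg _)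
    rw [sq_sqrt (by positivity)]
    exact hzq t ht
  rw [integral_Ioi_of_hasDerivAt_of_tendsto' hd (hI.sub (hI2.const_mul _)) hlim]
  simp [hq]

/-- The divergence theorem on the half-space for `(y, t + D) * q ^ (-a)`, where
`q = |y|² + (t + D)² - 1`. -/
lemma integral_halfSpace_rpow {ι : Type*} [Fintype ι] {D a : ℝ} (hD : 1 < D)
    (ha : (Fintype.card ι : ℝ) + 1 < 2 * a) :
    IntegrableOn (fun x : (ι → ℝ) × ℝ => (∑ i, x.1 i ^ 2 + (x.2 + D) ^ 2 - 1) ^ (-a))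
        {x | 0 < x.2} ∧
    IntegrableOn (fun x : (ι → ℝ) × ℝ => (∑ i, x.1 i ^ 2 + (x.2 + D) ^ 2 - 1) ^ (-a - 1))
        {x | 0 < x.2} ∧
    (2 * a - Fintype.card ι - 1) * (∫ x : (ι → ℝ) × ℝ in {x | 0 < x.2},
        (∑ i, x.1 i ^ 2 + (x.2 + D) ^ 2 - 1) ^ (-a)) +
      2 * a * (∫ x : (ι → ℝ) × ℝ in {x | 0 < x.2},
        (∑ i, x.1 i ^ 2 + (x.2 + D) ^ 2 - 1) ^ (-a - 1)) =
      D * ∫ y : ι → ℝ, (∑ i, y i ^ 2 + D ^ 2 - 1) ^ (-a) := by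
  have hε : 0 < D ^ 2 - 1 := by nlinarith
  have hcard : (0 : ℝ) ≤ Fintype.card ι := Nat.cast_nonneg _
  set q : (ι → ℝ) × ℝ → ℝ := fun x => ∑ i, x.1 i ^ 2 + (x.2 + D) ^ 2 - 1 with hq
  have hsum : ∀ y : ι → ℝ, 0 ≤ ∑ i, y i ^ 2 := fun y => Finset.sum_nonneg fun i _ => sq_nonneg _
  have hset : {x : (ι → ℝ) × ℝ | 0 < x.2} = Set.univ ×ˢ Set.Ioi 0 := by ext; simp
  have : (volume : Measure ((ι → ℝ) × ℝ)).IsAddHaarMeasure := by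
    rw [Measure.volume_eq_prod]; infer_instance
  have hmeas : MeasurableSet {x : (ι → ℝ) × ℝ | 0 < x.2} := by
    rw [hset]; exact MeasurableSet.univ.prod measurableSet_Ioi
  have hqm : Measurable q := by fun_prop
  have hqn : ∀ x ∈ {x : (ι → ℝ) × ℝ | 0 < x.2}, ‖x‖ ^ 2 + (D ^ 2 - 1) ≤ q x := by
    rintro ⟨y, t⟩ ht
    have ht : 0 < t := ht
    have h1 := norm_sq_le_sum_sq y
    have h2 : ‖(y, t)‖ ^ 2 ≤ ∑ i, y i ^ 2 + t ^ 2 := by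
      rcases max_choice ‖y‖ ‖t‖ with h | h <;> rw [Prod.norm_mk, h]
      · nlinarith
      · have := hsum y
        simpa using this
    simp only [hq]
    nlinarith
  have hq0 : ∀ x ∈ {x : (ι → ℝ) × ℝ | 0 < x.2}, 0 < q x := fun x hx => by
    nlinarith [hqn x hx, sq_nonneg ‖x‖]
  have hI : ∀ s : ℝ, a ≤ s → IntegrableOn (fun x => q x ^ (-s)) {x | 0 < x.2} := by
    intro s hs
    refine integrableOn_rpow_neg_of_norm_sq_add_le hmeas hqm hε hqn ?_
    simp
    linarith
  have hIa := hI a le_rfl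
  have hIa1 : IntegrableOn (fun x => q x ^ (-a - 1)) {x | 0 < x.2} := by
    have := hI (a + 1) (by linarith)
    rwa [neg_add'] at this
  refine ⟨hIa, hIa1, ?_⟩
  have hzq : ∀ x ∈ {x : (ι → ℝ) × ℝ | 0 < x.2},
      (x.2 + D) ^ 2 ≤ (1 + 1 / (D ^ 2 - 1)) * q x := fun x hx => by
    have h1 : 1 ≤ 1 / (D ^ 2 - 1) * q x := by
      rw [one_div, inv_mul_eq_div, one_le_div hε]
      nlinarith [hqn x hx, sq_nonneg ‖x‖]
    have h2 : q x = ∑ i, x.1 i ^ 2 + (x.2 + D) ^ 2 - 1 := rfl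
    linarith [hsum x.1]
  have hyq : ∀ i, ∀ x ∈ {x : (ι → ℝ) × ℝ | 0 < x.2}, x.1 i ^ 2 ≤ 1 * q x := fun i x hx => by
    have h1 := Finset.single_le_sum (f := fun i => x.1 i ^ 2) (fun i _ => sq_nonneg _)
      (Finset.mem_univ i)
    have h2 : q x = ∑ i, x.1 i ^ 2 + (x.2 + D) ^ 2 - 1 := rfl
    have h3 : 0 < x.2 := hx
    have h4 : 1 ≤ (x.2 + D) ^ 2 := by nlinarith
    linarith
  have hIt : IntegrableOn (fun x => (x.2 + D) ^ 2 * q x ^ (-a - 1)) {x | 0 < x.2} := by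
    refine Integrable.mono' (hIa.const_mul (1 + 1 / (D ^ 2 - 1)))
      (Measurable.aestronglyMeasurable (by fun_prop)) ?_
    filter_upwards [ae_restrict_mem hmeas] with x hx
    exact abs_sq_mul_rpow_neg_le (hq0 x hx) (hzq x hx)
  have hIy : ∀ i, IntegrableOn (fun x => x.1 i ^ 2 * q x ^ (-a - 1)) {x | 0 < x.2} := by
    intro i
    refine Integrable.mono' (hIa.const_mul 1)
      (Measurable.aestronglyMeasurable (by fun_prop)) ?_
    filter_upwards [ae_restrict_mem hmeas] with x hx
    exact abs_sq_mul_rpow_neg_le (hq0 x hx) (hyq i x hx)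
  have hrestr : (volume : Measure ((ι → ℝ) × ℝ)).restrict {x | 0 < x.2} =
      (volume : Measure (ι → ℝ)).prod (volume.restrict (Set.Ioi 0)) := by
    rw [hset, Measure.volume_eq_prod, ← Measure.prod_restrict, Measure.restrict_univ]
  have htan : ∀ i, ∫ x in {x : (ι → ℝ) × ℝ | 0 < x.2}, 2 * a * (x.1 i ^ 2 * q x ^ (-a - 1)) =
      ∫ x in {x : (ι → ℝ) × ℝ | 0 < x.2}, q x ^ (-a) := by
    intro i
    have e1 := (hIy i).const_mul (2 * a)
    have e2 := hIa
    rw [hrestr] at e1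
    rw [IntegrableOn, hrestr] at e2
    rw [hrestr, integral_prod_symm _ e1, integral_prod_symm _ e2]
    refine setIntegral_congr_fun measurableSet_Ioi fun t ht => ?_
    have ht : 0 < t := ht
    have := integral_sq_mul_rpow_sum_sq_add (ι := ι) (c := (t + D) ^ 2 - 1) (a := a)
      (by nlinarith) ha i
    simpa only [hq, add_sub_assoc] using this
  have hnor : ∫ x in {x : (ι → ℝ) × ℝ | 0 < x.2},
      (q x ^ (-a) - 2 * a * ((x.2 + D) ^ 2 * q x ^ (-a - 1))) =
      -(D * ∫ y : ι → ℝ, (∑ i, y i ^ 2 + D ^ 2 - 1) ^ (-a)) := by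
    have e1 : IntegrableOn (fun x => q x ^ (-a) - 2 * a * ((x.2 + D) ^ 2 * q x ^ (-a - 1)))
        {x | 0 < x.2} := hIa.sub (hIt.const_mul (2 * a))
    rw [IntegrableOn, hrestr] at e1
    rw [hrestr, integral_prod _ e1, ← integral_const_mul, ← integral_neg]
    congr 1 with y
    exact integral_Ioi_deriv_mul_rpow (hsum y) hD (by linarith)
  rw [integral_sub hIa (hIt.const_mul _), integral_const_mul] at hnor
  simp only [integral_const_mul] at htan
  have hqsum : ∫ x in {x : (ι → ℝ) × ℝ | 0 < x.2}, q x ^ (-a) =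
      ∑ i, (∫ x in {x : (ι → ℝ) × ℝ | 0 < x.2}, x.1 i ^ 2 * q x ^ (-a - 1)) +
      (∫ x in {x : (ι → ℝ) × ℝ | 0 < x.2}, (x.2 + D) ^ 2 * q x ^ (-a - 1)) -
      ∫ x in {x : (ι → ℝ) × ℝ | 0 < x.2}, q x ^ (-a - 1) := by
    have e1 : IntegrableOn (fun x => ∑ i, x.1 i ^ 2 * q x ^ (-a - 1)) {x | 0 < x.2} :=
      integrable_finsetSum _ fun i _ => hIy i
    have e2 : IntegrableOn (fun x => ∑ i, x.1 i ^ 2 * q x ^ (-a - 1) +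
        (x.2 + D) ^ 2 * q x ^ (-a - 1)) {x | 0 < x.2} := e1.add hIt
    rw [← integral_finsetSum _ fun i _ => hIy i, ← integral_add e1 hIt, ← integral_sub e2 hIa1]
    refine setIntegral_congr_fun hmeas fun x hx => ?_
    have h2 : q x = ∑ i, x.1 i ^ 2 + (x.2 + D) ^ 2 - 1 := rfl
    rw [← Finset.sum_mul, ← add_mul, ← sub_one_mul, ← h2, rpow_sub_one (hq0 x hx).ne',
      mul_div_cancel₀ _ (hq0 x hx).ne']
  have htan' := Finset.sum_congr rfl fun i (_ : i ∈ Finset.univ) => htan i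
  rw [← Finset.mul_sum, Finset.sum_const, Finset.card_univ, nsmul_eq_mul] at htan'
  linear_combination (-1 : ℝ) * hnor + htan' + 2 * a * hqsum

lemma QD_pos {n : ℕ} {D : ℝ} (hD : 1 < D) {x : HalfPt n} (hx : 0 ≤ x.2) : 0 < QD n D x := by
  have h : 0 ≤ ∑ i, x.1 i ^ 2 := Finset.sum_nonneg fun i _ => sq_nonneg _
  unfold QD
  nlinarith

lemma hasFDerivAt_QD (n : ℕ) (D : ℝ) (x : HalfPt n) :
    HasFDerivAt (QD n D) (∑ j, (2 * x.1 j) •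
      ((ContinuousLinearMap.proj (R := ℝ) (φ := fun _ : Fin (n - 1) => ℝ) j).comp
        (ContinuousLinearMap.fst ℝ (Fin (n - 1) → ℝ) ℝ)) +
      (2 * (x.2 + D)) • ContinuousLinearMap.snd ℝ (Fin (n - 1) → ℝ) ℝ) x := by
  refine HasFDerivAt.sub_const 1 (HasFDerivAt.add (HasFDerivAt.fun_sum fun j _ => ?_) ?_)
  · simpa using (((ContinuousLinearMap.proj (R := ℝ) (φ := fun _ : Fin (n - 1) => ℝ) j).comp
      (ContinuousLinearMap.fst ℝ (Fin (n - 1) → ℝ) ℝ)).hasFDerivAt (x := x)).pow 2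
  · simpa [mul_add] using (((ContinuousLinearMap.snd ℝ (Fin (n - 1) → ℝ) ℝ).hasFDerivAt
      (x := x)).add_const D).pow 2

lemma gradSq_const_mul_QD_rpow {n : ℕ} {D : ℝ} (A p : ℝ) {x : HalfPt n} (hx : QD n D x ≠ 0) :
    gradSq n (fun x => A * QD n D x ^ p) x =
      4 * p ^ 2 * A ^ 2 * (QD n D x + 1) * (QD n D x ^ (p - 1)) ^ 2 := by
  have h := (((hasFDerivAt_QD n D x).rpow_const (p := p) (Or.inl hx)).const_mul A).fderiv
  have hQ : QD n D x + 1 = ∑ i, x.1 i ^ 2 + (x.2 + D) ^ 2 := by unfold QD; ring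
  have hi : ∀ i : Fin (n - 1), fderiv ℝ (fun x => A * QD n D x ^ p) x (Pi.single i 1, (0 : ℝ)) =
      2 * p * A * QD n D x ^ (p - 1) * x.1 i := by
    intro i
    rw [h]
    simp [Pi.single_apply]
    ring
  have hn : fderiv ℝ (fun x => A * QD n D x ^ p) x ((0 : Fin (n - 1) → ℝ), 1) =
      2 * p * A * QD n D x ^ (p - 1) * (x.2 + D) := by
    rw [h]
    simp
    ring
  simp only [gradSq, hi, hn, hQ, mul_pow]
  rw [← Finset.mul_sum]
  ring

theorem bubble_integration_by_parts
    (n : ℕ) (hn : 4 ≤ n) (K H D : ℝ) (hK : K < 0) (hH : 0 < H)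
    (hD : D = Real.sqrt ((n : ℝ) * ((n : ℝ) - 1)) * H / Real.sqrt |K|) (hD1 : 1 < D) :
    cN n / 2 * (∫ x in {x : HalfPt n | 0 < x.2}, gradSq n (bubbleU n K D) x)
      = cN n * ((n : ℝ) - 2) / 4 * H *
            (∫ y : Fin (n - 1) → ℝ, bubbleU n K D (y, 0) ^ (2 * ((n : ℝ) - 1) / ((n : ℝ) - 2)))
          - 1 / 2 * |K| *
            (∫ x in {x : HalfPt n | 0 < x.2}, bubbleU n K D x ^ (2 * (n : ℝ) / ((n : ℝ) - 2))) := by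
  have hn' : (4 : ℝ) ≤ n := by exact_mod_cast hn
  have hn2 : (n : ℝ) - 2 ≠ 0 := by linarith
  have hKp : 0 < |K| := abs_pos.2 hK.ne
  have hB : 0 < 4 * (n : ℝ) * ((n : ℝ) - 1) := by nlinarith
  have hcard : (Fintype.card (Fin (n - 1)) : ℝ) = n - 1 := by
    rw [Fintype.card_fin, Nat.cast_sub (by omega)]; simp
  obtain ⟨hI, hI1, hmain⟩ := integral_halfSpace_rpow (ι := Fin (n - 1)) (a := (n : ℝ) - 1) hD1
    (by rw [hcard]; linarith)
  rw [hcard] at hmain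
  set A : ℝ := alphaN n * |K| ^ (-(((n : ℝ) - 2) / 4)) with hA
  have hA0 : 0 < A := by unfold alphaN at hA; rw [hA]; positivity
  have hAB : A = (4 * (n : ℝ) * ((n : ℝ) - 1) / |K|) ^ (((n : ℝ) - 2) / 4) := by
    rw [hA, alphaN, div_rpow hB.le hKp.le, rpow_neg hKp.le, ← div_eq_mul_inv]
  have hA4 : A ^ (2 * (n : ℝ) / ((n : ℝ) - 2)) =
      A ^ 2 * (4 * (n : ℝ) * ((n : ℝ) - 1) / |K|) := by
    have h1 : 2 * (n : ℝ) / ((n : ℝ) - 2) = 2 + 4 / ((n : ℝ) - 2) := by field_simp; ring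
    rw [h1, rpow_add hA0, rpow_two]
    congr 1
    have h2 : ((n : ℝ) - 2) / 4 * (4 / ((n : ℝ) - 2)) = 1 := by field_simp
    rw [hAB, ← rpow_mul (by positivity), h2, rpow_one]
  have hA2 : A ^ (2 * ((n : ℝ) - 1) / ((n : ℝ) - 2)) = A ^ 2 * (2 * D / H) := by
    have h1 : 2 * ((n : ℝ) - 1) / ((n : ℝ) - 2) = 2 + 2 / ((n : ℝ) - 2) := by field_simp; ring
    rw [h1, rpow_add hA0, rpow_two]
    congr 1
    have h2 : ((n : ℝ) - 2) / 4 * (2 / ((n : ℝ) - 2)) = 1 / 2 := by field_simp; norm_num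
    rw [hAB, ← rpow_mul (by positivity), h2, ← sqrt_eq_rpow, sqrt_div hB.le, mul_assoc 4,
      sqrt_mul (by norm_num), hD, show (4 : ℝ) = 2 ^ 2 by norm_num, sqrt_sq (by norm_num)]
    field_simp
  have hmeas : MeasurableSet {x : HalfPt n | 0 < x.2} := measurableSet_lt (by fun_prop) (by fun_prop)
  have hU : ∀ x : HalfPt n, 0 ≤ x.2 → ∀ e : ℝ, bubbleU n K D x ^ e =
      A ^ e * QD n D x ^ (-(((n : ℝ) - 2) / 2) * e) := by
    intro x hx e
    have hQ := QD_pos (n := n) hD1 hx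
    rw [bubbleU, ← hA, mul_rpow hA0.le (by positivity), ← rpow_mul hQ.le]
  have hvol : ∫ x in {x : HalfPt n | 0 < x.2}, bubbleU n K D x ^ (2 * (n : ℝ) / ((n : ℝ) - 2)) =
      A ^ 2 * (4 * (n : ℝ) * ((n : ℝ) - 1) / |K|) *
        ∫ x in {x : HalfPt n | 0 < x.2}, QD n D x ^ (-((n : ℝ) - 1) - 1) := by
    rw [← integral_const_mul]
    refine setIntegral_congr_fun hmeas fun x hx => ?_
    rw [hU x (le_of_lt hx), hA4]
    congr 2
    field_simp
    ring
  have hbdry : ∫ y : Fin (n - 1) → ℝ, bubbleU n K D (y, 0) ^ (2 * ((n : ℝ) - 1) / ((n : ℝ) - 2)) =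
      A ^ 2 * (2 * D / H) *
        ∫ y : Fin (n - 1) → ℝ, (∑ i, y i ^ 2 + D ^ 2 - 1) ^ (-((n : ℝ) - 1)) := by
    rw [← integral_const_mul]
    congr 1 with y
    rw [hU (y, 0) le_rfl, hA2, QD, zero_add]
    congr 2
    field_simp
  have hgrad : ∫ x in {x : HalfPt n | 0 < x.2}, gradSq n (bubbleU n K D) x =
      ((n : ℝ) - 2) ^ 2 * A ^ 2 *
        ((∫ x in {x : HalfPt n | 0 < x.2}, QD n D x ^ (-((n : ℝ) - 1))) +
          ∫ x in {x : HalfPt n | 0 < x.2}, QD n D x ^ (-((n : ℝ) - 1) - 1)) := by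
    unfold QD
    rw [← integral_add hI hI1, ← integral_const_mul]
    refine setIntegral_congr_fun hmeas fun x hx => ?_
    have hQ := QD_pos (n := n) hD1 (le_of_lt hx)
    refine (gradSq_const_mul_QD_rpow A _ hQ.ne').trans ?_
    change _ = _ * (QD n D x ^ (-((n : ℝ) - 1)) + QD n D x ^ (-((n : ℝ) - 1) - 1))
    have h1 : (QD n D x ^ (-(((n : ℝ) - 2) / 2) - 1)) ^ 2 = QD n D x ^ (-((n : ℝ) - 1) - 1) := by
      rw [← rpow_natCast, ← rpow_mul hQ.le]
      congr 1
      push_cast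
      ring
    have h2 : QD n D x ^ (-((n : ℝ) - 1)) = QD n D x * QD n D x ^ (-((n : ℝ) - 1) - 1) := by
      rw [rpow_sub_one hQ.ne', mul_div_cancel₀ _ hQ.ne']
    rw [h1, h2]
    ring
  rw [hvol, hbdry, hgrad]
  unfold QD cN
  field_simp
  linear_combination (4 * ((n : ℝ) - 1)) * hmain
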